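/- arXiv:1902.10970 — 2 statements merged into one kernel-verified Lean document; each statement's English description precedes it below -/
import Mathlib

section
/- Let m and n be integers with 2 ≤ m ≤ n/2, let B be the open unit ball in ℝⁿ centered at the origin, and let R ≥ 1. Then for every radial function u ∈ C₀^∞(B) and every x ∈ B \ {0}, one has |u(x)| ≤ ( I_{n,m}[u,B,R] / ( ω_{n−1} · C₁(n/m) · (n−2)^{n/m} · R_{n,m−2,n/m} ) )^{m/n} · E₁(|x|/R)^{1 − m/n} · ( ln E₁(|x|/R) − ln E₁(1/R) )^{1 − m/n}, where ω_{n−1} is the surface area of the unit sphere S^{n−1} ⊂ ℝⁿ and C₁(p) := 1/(2^{p−1} − 1). -/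
/-!
Write `p = n / m ≥ 2` and `κ = 1 - 1 / p`. For a radial `u` everything reduces to its profile `w`,
`u x = w ‖x‖`, which is smooth, flat near `r = 1`, and on which the Laplacian acts as
`w'' + (n - 1) w' / r`.

* Away from the critical weight, the one-dimensional Hardy inequality `hardy_weighted` applies to
  `z ↦ z'` and to `z ↦ z' + (n - 1) z / r`. Iterating the two in polar coordinates
  (`rellich_chain`, `reduce_to_laplacian`) bounds `∫ |∇^m u|^p` below by
  `ω R_{n,m-2,p} ∫ |Δu|^p r^(2 p - 1) dr`, and one more use (`gradient_step`) bounds the latter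
  integral below by `(n - 2)^p ∫ |w'|^p r^{p-1} dr`. The product of all these constants is the one
  in the statement.
* At the critical weight, with `E r = E₁(r / R)`, the inequality `log_hardy` reads
  `κ^p ∫ |w|^p / (r E^p) + C ∫ |w' + κ w / (r E)|^p r^{p-1} ≤ ∫ |w'|^p r^{p-1}`. The remainder comes
  from the quantitative tangent line inequality
  `|b|^p + p |b|^{p-2} b (a - b) + C |a - b|^p ≤ |a|^p`, `C = 1 / (2^{p-1} - 1)`
  (`abs_rpow_tangent_remainder`).
* Since `w' + κ w / (r E) = E^κ (w E^{-κ})'`, the fundamental theorem of calculus on `[‖x‖, 1]` and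
  Hölder's inequality bound `|w ‖x‖|` by the remainder (`pointwise_le_remainder`).

Every Hardy inequality is proved the same way: the tangent line inequality is used pointwise with
`a` the operator and `b` its value on the virtual extremal, so that the linear term becomes an
exact derivative, which is integrated over `(0, 1]` (`integral_le_of_add_deriv_le`).
-/

open MeasureTheory Real

/-- `E₁(t) = 1 - ln t`. -/
noncomputable def E1 (t : ℝ) : ℝ := 1 - Real.log t

/-- `E₂(t) = ln (e E₁(t)) = 1 + ln E₁(t)`. -/
noncomputable def E2 (t : ℝ) : ℝ := 1 + Real.log (E1 t)

/-- The Euclidean Laplacian of a scalar function on `ℝⁿ`. -/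
noncomputable def lap {n : ℕ} (f : EuclideanSpace ℝ (Fin n) → ℝ) :
    EuclideanSpace ℝ (Fin n) → ℝ := fun x =>
  ∑ i, fderiv ℝ (fun y => fderiv ℝ f y (EuclideanSpace.single i 1)) x (EuclideanSpace.single i 1)

/-- The constant `R_{n,m,p}`. -/
noncomputable def Rconst (n m : ℕ) (p : ℝ) : ℝ :=
  if Even m then
    ∏ j ∈ Finset.range (m / 2),
      (((n : ℝ) * (p - 1) + 2 * j * p) / p * (((n : ℝ) - 2 * (j + 1) * p) / p)) ^ p
  else
    (((n : ℝ) - p) / p) ^ p *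
      ∏ j ∈ Finset.range (m / 2),
        (((n : ℝ) * (p - 1) + p + 2 * j * p) / p * (((n : ℝ) - p - 2 * (j + 1) * p) / p)) ^ p

/-- The constant `R_{n,m} = ((n-2)(n-m)/n)^{n/m} R_{n,m-2,n/m}`. -/
noncomputable def Rnm (n m : ℕ) : ℝ :=
  (((n : ℝ) - 2) * ((n : ℝ) - m) / n) ^ ((n : ℝ) / m) * Rconst n (m - 2) ((n : ℝ) / m)

/-- `|∇^m f|`: the norm of `Δ^{m/2} f` for even `m`, of `∇ Δ^{(m-1)/2} f` for odd `m`. -/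
noncomputable def nablaPowNorm {n : ℕ} (m : ℕ) (f : EuclideanSpace ℝ (Fin n) → ℝ)
    (x : EuclideanSpace ℝ (Fin n)) : ℝ :=
  if Even m then |lap^[m / 2] f x| else ‖gradient (lap^[m / 2] f) x‖

/-- `I_{n,m}[u, Ω, R]`. -/
noncomputable def Inm (n m : ℕ) (Ω : Set (EuclideanSpace ℝ (Fin n))) (R : ℝ)
    (u : EuclideanSpace ℝ (Fin n) → ℝ) : ℝ :=
  (∫ x in Ω, (nablaPowNorm m u x) ^ ((n : ℝ) / m)) -
    Rnm n m * ∫ x in Ω, |u x| ^ ((n : ℝ) / m) / (‖x‖ ^ n * (E1 (‖x‖ / R)) ^ ((n : ℝ) / m))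

/-- `ω_{n-1}`: the surface area of the unit sphere in `ℝⁿ`, equal to `n` times the volume
of the unit ball. -/
noncomputable def sphereArea (n : ℕ) : ℝ :=
  (n : ℝ) * (volume (Metric.ball (0 : EuclideanSpace ℝ (Fin n)) 1)).toReal

/-! ### Convexity inequalities -/

theorem abs_rpow_sub_two_mul {p : ℝ} (hp : 2 ≤ p) (b : ℝ) :
    |b| ^ (p - 2) * b * b = |b| ^ p := by
  rcases eq_or_ne b 0 with rfl | hb
  · simp [Real.zero_rpow (by linarith : p ≠ 0)]
  · have hb' : 0 < |b| := abs_pos.mpr hb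
    rw [mul_assoc, ← abs_mul_abs_self b, ← sq, ← Real.rpow_natCast, ← Real.rpow_add hb']
    congr 1
    push_cast
    ring

/-- The tangent line inequality for the convex function `|·|^p`. -/
theorem abs_rpow_tangent {p : ℝ} (hp : 2 ≤ p) (a b : ℝ) :
    |b| ^ p + p * |b| ^ (p - 2) * b * (a - b) ≤ |a| ^ p := by
  have hp0 : 0 < p := by linarith
  have hpq : p.HolderConjugate (p / (p - 1)) := Real.HolderConjugate.conjExponent (by linarith)
  have hy := Real.young_inequality_of_nonneg (abs_nonneg a)
    (Real.rpow_nonneg (abs_nonneg b) (p - 1)) hpq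
  rw [← Real.rpow_mul (abs_nonneg b), mul_div_cancel₀ _ (by linarith : p - 1 ≠ 0)] at hy
  have h1 : |b| ^ (p - 2) * b * a ≤ |a| * |b| ^ (p - 1) := by
    rcases eq_or_ne b 0 with rfl | hb
    · simp [Real.zero_rpow (by linarith : p - 1 ≠ 0)]
    · have hb' : 0 < |b| := abs_pos.mpr hb
      have : |b| ^ (p - 1) = |b| ^ (p - 2) * |b| := by
        rw [← Real.rpow_add_one hb'.ne']
        congr 1
        ring
      rw [this, mul_assoc]
      calc |b| ^ (p - 2) * (b * a) ≤ |b| ^ (p - 2) * (|b| * |a|) := by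
            rw [← abs_mul]
            gcongr
            exact le_abs_self _
        _ = _ := by ring
  have h2 := abs_rpow_sub_two_mul hp b
  have h3 : p * (|a| * |b| ^ (p - 1)) ≤ |a| ^ p + (p - 1) * |b| ^ p := by
    calc p * (|a| * |b| ^ (p - 1)) ≤ p * (|a| ^ p / p + |b| ^ p / (p / (p - 1))) := by gcongr
      _ = _ := by
        have : p - 1 ≠ 0 := by linarith
        field_simp
  have h4 := mul_le_mul_of_nonneg_left h1 hp0.le
  calc |b| ^ p + p * |b| ^ (p - 2) * b * (a - b)
      = |b| ^ p + p * (|b| ^ (p - 2) * b * a) - p * (|b| ^ (p - 2) * b * b) := by ring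
    _ ≤ |a| ^ p := by rw [h2]; linarith

/-- Clarkson's inequality for real numbers. -/
theorem clarkson_real {p : ℝ} (hp : 2 ≤ p) (a b : ℝ) :
    |(a + b) / 2| ^ p + |(a - b) / 2| ^ p ≤ (|a| ^ p + |b| ^ p) / 2 := by
  have key : ∀ y : ℝ, |y| ^ p = (y ^ 2) ^ (p / 2) := by
    intro y
    rw [← sq_abs, ← Real.rpow_natCast, ← Real.rpow_mul (abs_nonneg y)]
    congr 1
    push_cast
    ring
  have hq : 1 ≤ p / 2 := by linarith
  rw [key, key, key a, key b]
  have h1 := Real.add_rpow_le_rpow_add (sq_nonneg ((a + b) / 2)) (sq_nonneg ((a - b) / 2)) hq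
  have h2 := (convexOn_rpow hq).2 (show a ^ 2 ∈ Set.Ici (0 : ℝ) from sq_nonneg a)
    (show b ^ 2 ∈ Set.Ici (0 : ℝ) from sq_nonneg b) (by norm_num : (0 : ℝ) ≤ 1 / 2)
    (by norm_num : (0 : ℝ) ≤ 1 / 2) (by norm_num)
  simp only [smul_eq_mul] at h2
  have h3 : ((a + b) / 2) ^ 2 + ((a - b) / 2) ^ 2 = 1 / 2 * a ^ 2 + 1 / 2 * b ^ 2 := by ring
  rw [h3] at h1
  linarith

/-- The tangent line inequality for `|·|^p` with a quantitative remainder. Feeding a remainder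
constant `c` at the midpoint of `a` and `b` into Clarkson's inequality improves it to `θ (c + 1)`,
`θ = 2^{1-p}`; the constant in the statement is the fixed point of this improvement. -/
theorem abs_rpow_tangent_remainder {p : ℝ} (hp : 2 ≤ p) (a b : ℝ) :
    |b| ^ p + p * |b| ^ (p - 2) * b * (a - b) + 1 / (2 ^ (p - 1) - 1) * |a - b| ^ p ≤ |a| ^ p := by
  have h2 : (2 : ℝ) ≤ 2 ^ (p - 1) := by
    calc (2 : ℝ) = 2 ^ (1 : ℝ) := by simp
      _ ≤ 2 ^ (p - 1) := Real.rpow_le_rpow_of_exponent_le (by norm_num) (by linarith)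
  set C : ℝ := 1 / (2 ^ (p - 1) - 1) with hC
  set θ : ℝ := 1 / 2 ^ (p - 1) with hθ
  have hCθ : C = θ * C + θ := by
    rw [hC, hθ]
    have : (2 : ℝ) ^ (p - 1) - 1 ≠ 0 := by linarith
    have : (2 : ℝ) ^ (p - 1) ≠ 0 := by linarith
    field_simp
    ring
  have hθ0 : 0 ≤ θ := by positivity
  have hθ1 : θ < 1 := by
    rw [hθ, div_lt_one (by linarith)]
    linarith
  have hθ2 : 2 * (1 / 2 : ℝ) ^ p = θ := by
    rw [hθ, one_div, Real.inv_rpow (by norm_num), Real.rpow_sub_one (by norm_num)]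
    field_simp
  -- `k` improvement steps starting from the constant `0` give the constant `C (1 - θ ^ k)`
  have main : ∀ k : ℕ, ∀ a : ℝ,
      |b| ^ p + p * |b| ^ (p - 2) * b * (a - b) + C * (1 - θ ^ k) * |a - b| ^ p ≤ |a| ^ p := by
    intro k
    induction k with
    | zero =>
      intro a
      simpa using abs_rpow_tangent hp a b
    | succ k ih =>
      intro a
      have h1 := ih ((a + b) / 2)
      have h3 := clarkson_real hp a b
      have e1 : (a + b) / 2 - b = (a - b) / 2 := by ring
      have e2 : |(a - b) / 2| ^ p = |a - b| ^ p * (1 / 2) ^ p := by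
        rw [div_eq_mul_one_div, abs_mul, Real.mul_rpow (abs_nonneg _) (abs_nonneg _)]
        norm_num
      rw [e1, e2] at h1
      rw [e2] at h3
      have e3 : C * (1 - θ ^ (k + 1)) = θ * (C * (1 - θ ^ k) + 1) := by
        rw [pow_succ]
        linear_combination hCθ
      have e4 : θ * (C * (1 - θ ^ k) + 1) * |a - b| ^ p
          = 2 * (1 / 2) ^ p * (C * (1 - θ ^ k) + 1) * |a - b| ^ p := by rw [hθ2]
      rw [e3, e4]
      linarith
  have hlim : Filter.Tendsto (fun k : ℕ => |b| ^ p + p * |b| ^ (p - 2) * b * (a - b)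
      + C * (1 - θ ^ k) * |a - b| ^ p) Filter.atTop
      (nhds (|b| ^ p + p * |b| ^ (p - 2) * b * (a - b) + C * (1 - 0) * |a - b| ^ p)) :=
    (((tendsto_pow_atTop_nhds_zero_of_lt_one hθ0 hθ1).const_sub 1).const_mul C
      |>.mul_const _).const_add _
  have := le_of_tendsto' hlim (fun k => main k a)
  simpa using this

/-! ### Integration of pointwise inequalities -/

/-- Integration over `(0, 1]` of a pointwise inequality `G + Φ' ≤ F`, when the boundary terms
have the favourable sign. Integrability of `G` is part of the conclusion. -/
theorem integral_le_of_add_deriv_le {F G Φ Φ' : ℝ → ℝ}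
    (hG : ContinuousOn G (Set.Ioc 0 1)) (hΦ'c : ContinuousOn Φ' (Set.Ioc 0 1))
    (hG0 : ∀ r, 0 < r → r ≤ 1 → 0 ≤ G r)
    (hΦ : ∀ r, 0 < r → r ≤ 1 → HasDerivAt Φ (Φ' r) r)
    (hle : ∀ r, 0 < r → r ≤ 1 → G r + Φ' r ≤ F r)
    (hF0 : ∀ r, 0 < r → 0 ≤ F r)
    (hF : IntegrableOn F (Set.Ioc 0 1))
    (h1 : 0 ≤ Φ 1)
    (h0 : ∀ δ : ℝ, 0 < δ → ∀ᶠ ε in nhdsWithin (0 : ℝ) (Set.Ioi 0), Φ ε ≤ δ) :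
    IntegrableOn G (Set.Ioc 0 1) ∧ ∫ r in Set.Ioc 0 1, G r ≤ ∫ r in Set.Ioc 0 1, F r := by
  have hIoc : ∀ ε : ℝ, 0 < ε → ∀ H : ℝ → ℝ, ContinuousOn H (Set.Ioc 0 1) →
      IntegrableOn H (Set.Ioc ε 1) := by
    intro ε hε H hH
    refine (ContinuousOn.integrableOn_Icc (hH.mono ?_)).mono_set Set.Ioc_subset_Icc_self
    exact fun r hr => ⟨lt_of_lt_of_le hε hr.1, hr.2⟩
  have step : ∀ ε : ℝ, 0 < ε → ε ≤ 1 →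
      ∫ r in Set.Ioc ε 1, G r ≤ (∫ r in Set.Ioc 0 1, F r) + Φ ε := by
    intro ε hε hε1
    have hsub : Set.Ioc ε 1 ⊆ Set.Ioc (0 : ℝ) 1 := Set.Ioc_subset_Ioc_left hε.le
    have e1 : ∫ r in Set.Ioc ε 1, Φ' r = Φ 1 - Φ ε := by
      rw [← intervalIntegral.integral_of_le hε1]
      apply intervalIntegral.integral_eq_sub_of_hasDerivAt
      · intro r hr
        rw [Set.uIcc_of_le hε1] at hr
        exact hΦ r (lt_of_lt_of_le hε hr.1) hr.2
      · exact (intervalIntegrable_iff_integrableOn_Ioc_of_le hε1).2 (hIoc ε hε _ hΦ'c)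
    have e2 : ∫ r in Set.Ioc ε 1, (G r + Φ' r) ≤ ∫ r in Set.Ioc ε 1, F r := by
      apply setIntegral_mono_on ((hIoc ε hε _ hG).add (hIoc ε hε _ hΦ'c)) (hF.mono_set hsub)
        measurableSet_Ioc
      intro r hr
      exact hle r (lt_trans hε hr.1) hr.2
    rw [integral_add (hIoc ε hε _ hG) (hIoc ε hε _ hΦ'c), e1] at e2
    have e3 : ∫ r in Set.Ioc ε 1, F r ≤ ∫ r in Set.Ioc 0 1, F r := by
      apply setIntegral_mono_set hF _ hsub.eventuallyLE
      rw [Filter.EventuallyLE, ae_restrict_iff' measurableSet_Ioc]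
      exact Filter.Eventually.of_forall fun r hr => hF0 r hr.1
    linarith
  have hlt1 : ∀ᶠ ε in nhdsWithin (0 : ℝ) (Set.Ioi 0), 0 < ε ∧ ε ≤ 1 := by
    filter_upwards [Ioc_mem_nhdsGT (zero_lt_one' ℝ)] with ε hε using hε
  have htend : Filter.Tendsto (fun ε : ℝ => max ε 0) (nhdsWithin 0 (Set.Ioi 0)) (nhds 0) := by
    have : Filter.Tendsto (fun ε : ℝ => max ε 0) (nhds 0) (nhds (max 0 0)) :=
      (continuous_id.max continuous_const).tendsto 0
    simpa using this.mono_left nhdsWithin_le_nhds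
  have hseq : ∃ a : ℕ → ℝ, (∀ i, 0 < a i) ∧ Filter.Tendsto a Filter.atTop (nhds 0) :=
    ⟨fun i => 1 / ((i : ℝ) + 1), fun i => by positivity, tendsto_one_div_add_atTop_nhds_zero_nat⟩
  obtain ⟨a, ha0, ha⟩ := hseq
  have haw : Filter.Tendsto a Filter.atTop (nhdsWithin 0 (Set.Ioi 0)) :=
    tendsto_nhdsWithin_iff.2 ⟨ha, Filter.Eventually.of_forall ha0⟩
  have hGint : IntegrableOn G (Set.Ioc 0 1) := by
    refine integrableOn_Ioc_of_intervalIntegral_norm_bounded_left (l := Filter.atTop) (a := a)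
      (I := (∫ r in Set.Ioc 0 1, F r) + 1) (fun i => hIoc _ (ha0 i) _ hG) ha ?_
    filter_upwards [haw.eventually hlt1, haw.eventually (h0 1 one_pos)] with i hi hi'
    have e : ∫ r in Set.Ioc (a i) 1, ‖G r‖ = ∫ r in Set.Ioc (a i) 1, G r := by
      apply setIntegral_congr_fun measurableSet_Ioc
      intro r hr
      exact Real.norm_of_nonneg (hG0 r (lt_trans hi.1 hr.1) hr.2)
    rw [e]
    linarith [step _ hi.1 hi.2]
  refine ⟨hGint, le_of_forall_pos_le_add fun δ hδ => ?_⟩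
  have hT : Filter.Tendsto (fun i => ∫ r in Set.Ioc (a i) 1, G r) Filter.atTop
      (nhds (∫ r in Set.Ioc 0 1, G r)) := by
    have hc := (aecover_Ioc_of_Ioc (μ := volume) (A := (0 : ℝ)) (B := 1) ha
      tendsto_const_nhds).integral_tendsto_of_countably_generated hGint
    refine hc.congr fun i => ?_
    rw [Measure.restrict_restrict measurableSet_Ioc,
      Set.inter_eq_self_of_subset_left (Set.Ioc_subset_Ioc_left (ha0 i).le)]
  apply le_of_tendsto hT
  filter_upwards [haw.eventually hlt1, haw.eventually (h0 δ hδ)] with i hi hi'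
  linarith [step _ hi.1 hi.2]

/-! ### One-dimensional Hardy inequalities -/

/-- The weighted one-dimensional Hardy inequality
`|c|^p ∫₀¹ |z|^p r^{s-p} dr ≤ ∫₀¹ |z' + a z / r|^p r^s dr`, `c = (s + 1 - p) / p - a`. With
`a = 0` it is the classical inequality; with `a = n - 1` and `z = w'` the operator on the right is the
radial Laplacian of `w`. -/
theorem hardy_weighted {p s a c : ℝ} (hp : 2 ≤ p) {z z' : ℝ → ℝ}
    (hz : ∀ r, HasDerivAt z (z' r) r) (hz' : Continuous z') (hz1 : z 1 = 0)
    (hs : 0 < s + 1 - p) (hc : p * c = s + 1 - p - p * a) (hc0 : c ≠ 0)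
    (hF : IntegrableOn (fun r => |z' r + a / r * z r| ^ p * r ^ s) (Set.Ioc 0 1)) :
    IntegrableOn (fun r => |z r| ^ p * r ^ (s - p)) (Set.Ioc 0 1) ∧
      |c| ^ p * ∫ r in Set.Ioc 0 1, |z r| ^ p * r ^ (s - p) ≤
        ∫ r in Set.Ioc 0 1, |z' r + a / r * z r| ^ p * r ^ s := by
  have hp0 : 0 < p := by linarith
  have hzc : Continuous z := continuous_iff_continuousAt.2 fun r => (hz r).continuousAt
  have habs : ∀ t : ℝ, 0 ≤ t → Continuous fun r => |z r| ^ t := fun t ht =>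
    hzc.abs.rpow_const fun _ => Or.inr ht
  have hpow : ∀ t : ℝ, ContinuousOn (fun r : ℝ => r ^ t) (Set.Ioc 0 1) := fun t r hr =>
    (Real.continuousAt_rpow_const r t (Or.inl hr.1.ne')).continuousWithinAt
  have hcp : 0 < |c| ^ p := Real.rpow_pos_of_pos (abs_pos.2 hc0) p
  set Φ : ℝ → ℝ := fun r => -(|c| ^ (p - 2) * c) * (|z r| ^ p * r ^ (s + 1 - p)) with hΦdef
  have hΦcont : Continuous Φ :=
    continuous_const.mul ((habs p hp0.le).mul
      (continuous_id.rpow_const fun _ => Or.inr hs.le))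
  have key := integral_le_of_add_deriv_le
    (F := fun r => |z' r + a / r * z r| ^ p * r ^ s)
    (G := fun r => |c| ^ p * (|z r| ^ p * r ^ (s - p)))
    (Φ := Φ)
    (Φ' := fun r => -(|c| ^ (p - 2) * c) * (p * |z r| ^ (p - 2) * z r * z' r * r ^ (s + 1 - p)
      + |z r| ^ p * ((s + 1 - p) * r ^ (s - p))))
    (((habs p hp0.le).continuousOn.mul (hpow _)).const_smul (|c| ^ p))
    (continuousOn_const.mul ((((((continuous_const.mul (habs (p - 2) (by linarith))).mul
      hzc).mul hz').continuousOn.mul (hpow _))).add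
      ((habs p hp0.le).continuousOn.mul (continuousOn_const.mul (hpow _)))))
    (fun r hr _ => by positivity)
    (fun r hr _ => ?_) (fun r hr _ => ?_) (fun r hr => by positivity) hF ?_ ?_
  · obtain ⟨k1, k2⟩ := key
    rw [integral_const_mul] at k2
    refine ⟨?_, k2⟩
    have := k1.const_mul ((|c| ^ p)⁻¹)
    refine this.congr (Filter.Eventually.of_forall fun r => ?_)
    simp only
    rw [← mul_assoc, inv_mul_cancel₀ hcp.ne', one_mul]
  · have h1 : HasDerivAt (fun r => |z r| ^ p) (p * |z r| ^ (p - 2) * z r * z' r) r :=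
      (hasDerivAt_abs_rpow (z r) (by linarith : 1 < p)).comp r (hz r)
    have h2 : HasDerivAt (fun r : ℝ => r ^ (s + 1 - p)) ((s + 1 - p) * r ^ (s - p)) r := by
      have := Real.hasDerivAt_rpow_const (x := r) (p := s + 1 - p) (Or.inl hr.ne')
      convert this using 3
      ring
    exact (h1.mul h2).const_mul _
  -- `-c z / r` is the value of `z' + a z / r` on the virtual extremal `r ^ (-(a + c))`
  · have ht := abs_rpow_tangent hp (z' r + a / r * z r) (-c * z r / r)
    rw [← abs_rpow_sub_two_mul hp (-c * z r / r)] at ht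
    have hrs : r ^ s = r ^ (s - p) * r ^ (p - 2) * r ^ 2 := by
      rw [← Real.rpow_add hr, ← Real.rpow_natCast, ← Real.rpow_add hr]
      congr 1
      push_cast
      ring
    have hrs1 : r ^ (s + 1 - p) = r ^ (s - p) * r := by
      rw [← Real.rpow_add_one hr.ne']
      congr 1
      ring
    have hb : |-c * z r / r| ^ (p - 2) * r ^ (p - 2) = |c| ^ (p - 2) * |z r| ^ (p - 2) := by
      rw [← Real.mul_rpow (abs_nonneg _) hr.le, ← Real.mul_rpow (abs_nonneg _) (abs_nonneg _),
        abs_div, abs_mul, abs_neg, abs_of_pos hr, div_mul_cancel₀ _ hr.ne']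
    have hrnn : 0 ≤ r ^ s := Real.rpow_nonneg hr.le s
    refine le_trans (le_of_eq ?_) (mul_le_mul_of_nonneg_right ht hrnn)
    rw [hrs, hrs1, ← abs_rpow_sub_two_mul hp c, ← abs_rpow_sub_two_mul hp (z r)]
    have hr2 : r ≠ 0 := hr.ne'
    generalize |-c * z r / r| ^ (p - 2) = B at *
    generalize |c| ^ (p - 2) = Y at *
    generalize |z r| ^ (p - 2) = X at *
    generalize r ^ (s - p) = T at *
    generalize r ^ (p - 2) = Q at *
    have hs' : s + 1 - p = p * c + p * a := by linarith
    rw [hs']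
    calc _ = (Y * X) * (T * (c ^ 2 * z r ^ 2 - p * c * z r * (r * z' r + (c + a) * z r))) := by
          ring
      _ = (B * Q) * (T * (c ^ 2 * z r ^ 2 - p * c * z r * (r * z' r + (c + a) * z r))) := by
          rw [hb]
      _ = _ := by
          field_simp
          ring
  · simp [Φ, hz1, Real.zero_rpow hp0.ne']
  · intro δ hδ
    have h0 : Φ 0 = 0 := by simp [Φ, Real.zero_rpow hs.ne']
    have : ∀ᶠ ε in nhds (0 : ℝ), Φ ε < δ :=
      (hΦcont.tendsto 0).eventually (gt_mem_nhds (by rw [h0]; exact hδ))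
    exact (this.filter_mono nhdsWithin_le_nhds).mono fun _ h => h.le

/-! ### The critical logarithmic weight -/

theorem E1_div_one_le {R r : ℝ} (hR : 1 ≤ R) (hr : 0 < r) (hr1 : r ≤ 1) : 1 ≤ E1 (r / R) := by
  have : Real.log (r / R) ≤ 0 :=
    Real.log_nonpos (by positivity) (by rw [div_le_one (by linarith)]; linarith)
  unfold E1
  linarith

theorem hasDerivAt_E1_div {R r : ℝ} (hR : 1 ≤ R) (hr : 0 < r) :
    HasDerivAt (fun r => E1 (r / R)) (-(1 / r)) r := by
  have hR0 : R ≠ 0 := by linarith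
  have h := ((hasDerivAt_id r).div_const R).log (div_ne_zero hr.ne' hR0)
  refine (h.const_sub 1).congr_deriv ?_
  simp only [id]
  field_simp

theorem continuousOn_E1_div {R : ℝ} (hR : 1 ≤ R) :
    ContinuousOn (fun r => E1 (r / R)) (Set.Ioc 0 1) := fun r hr =>
  (hasDerivAt_E1_div hR hr.1).continuousAt.continuousWithinAt

theorem continuousOn_rpow_Ioc (t : ℝ) : ContinuousOn (fun r : ℝ => r ^ t) (Set.Ioc 0 1) :=
  fun r hr => (Real.continuousAt_rpow_const r t (Or.inl hr.1.ne')).continuousWithinAt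

theorem continuousOn_E1_div_rpow {R : ℝ} (hR : 1 ≤ R) (t : ℝ) :
    ContinuousOn (fun r => (E1 (r / R)) ^ t) (Set.Ioc 0 1) :=
  (continuousOn_E1_div hR).rpow_const fun _ hr =>
    Or.inl (by have := E1_div_one_le hR hr.1 hr.2; linarith)

/-- The critical (logarithmic) one-dimensional Hardy inequality with remainder. With
`E r = E1 (r / R)`, the quantity `w' + κ w / (r E)` equals `E^κ (w E^{-κ})'`. -/
theorem log_hardy {p R κ C : ℝ} (hp : 2 ≤ p) (hR : 1 ≤ R) (hκ : p * κ = p - 1)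
    (hC : C = 1 / (2 ^ (p - 1) - 1)) {w w' : ℝ → ℝ}
    (hw : ∀ r, HasDerivAt w (w' r) r) (hw' : Continuous w') (hw1 : w 1 = 0)
    (hF : IntegrableOn (fun r => |w' r| ^ p * r ^ (p - 1)) (Set.Ioc 0 1)) :
    IntegrableOn (fun r => |w' r + κ * w r / (r * E1 (r / R))| ^ p * r ^ (p - 1))
        (Set.Ioc 0 1) ∧
      κ ^ p * (∫ r in Set.Ioc 0 1, |w r| ^ p / (r * E1 (r / R) ^ p)) +
        C * (∫ r in Set.Ioc 0 1, |w' r + κ * w r / (r * E1 (r / R))| ^ p * r ^ (p - 1)) ≤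
        ∫ r in Set.Ioc 0 1, |w' r| ^ p * r ^ (p - 1) := by
  have hp0 : 0 < p := by linarith
  have hκ0 : 0 < κ := by
    by_contra h
    have := mul_nonpos_of_nonneg_of_nonpos hp0.le (not_lt.1 h)
    linarith
  have hC0 : 0 < C := by
    have h2 : (2 : ℝ) ≤ 2 ^ (p - 1) := by
      calc (2 : ℝ) = 2 ^ (1 : ℝ) := by simp
        _ ≤ 2 ^ (p - 1) := Real.rpow_le_rpow_of_exponent_le (by norm_num) (by linarith)
    rw [hC]
    apply one_div_pos.2
    linarith
  have hwc : Continuous w := continuous_iff_continuousAt.2 fun r => (hw r).continuousAt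
  have habs : ∀ t : ℝ, 0 ≤ t → Continuous fun r => |w r| ^ t := fun t ht =>
    hwc.abs.rpow_const fun _ => Or.inr ht
  have hE1 : ∀ r, 0 < r → r ≤ 1 → 0 < E1 (r / R) := fun r h h' =>
    lt_of_lt_of_le one_pos (E1_div_one_le hR h h')
  have hEc := continuousOn_E1_div hR
  have hG1c : ContinuousOn (fun r => κ ^ p * (|w r| ^ p / (r * E1 (r / R) ^ p)))
      (Set.Ioc 0 1) := by
    refine continuousOn_const.mul ((habs p hp0.le).continuousOn.div
      (continuousOn_id.mul (continuousOn_E1_div_rpow hR p)) fun r hr => ?_)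
    exact mul_ne_zero hr.1.ne' (Real.rpow_pos_of_pos (hE1 r hr.1 hr.2) p).ne'
  have hdc : ContinuousOn (fun r => w' r + κ * w r / (r * E1 (r / R))) (Set.Ioc 0 1) :=
    hw'.continuousOn.add ((continuous_const.mul hwc).continuousOn.div (continuousOn_id.mul hEc)
      fun r hr => mul_ne_zero hr.1.ne' (hE1 r hr.1 hr.2).ne')
  have hG2c : ContinuousOn
      (fun r => C * (|w' r + κ * w r / (r * E1 (r / R))| ^ p * r ^ (p - 1))) (Set.Ioc 0 1) :=
    continuousOn_const.mul ((hdc.abs.rpow_const fun _ _ => Or.inr hp0.le).mul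
      (continuousOn_rpow_Ioc _))
  have hG1nn : ∀ r, 0 < r → r ≤ 1 → 0 ≤ κ ^ p * (|w r| ^ p / (r * E1 (r / R) ^ p)) := by
    intro r h h'
    have := hE1 r h h'
    positivity
  have hG2nn : ∀ r, 0 < r → r ≤ 1 →
      0 ≤ C * (|w' r + κ * w r / (r * E1 (r / R))| ^ p * r ^ (p - 1)) := by
    intro r h h'
    positivity
  have key := integral_le_of_add_deriv_le
    (F := fun r => |w' r| ^ p * r ^ (p - 1))
    (G := fun r => κ ^ p * (|w r| ^ p / (r * E1 (r / R) ^ p)) +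
      C * (|w' r + κ * w r / (r * E1 (r / R))| ^ p * r ^ (p - 1)))
    (Φ := fun r => -(κ ^ (p - 2) * κ) * (|w r| ^ p * E1 (r / R) ^ (1 - p)))
    (Φ' := fun r => -(κ ^ (p - 2) * κ) * (p * |w r| ^ (p - 2) * w r * w' r * E1 (r / R) ^ (1 - p)
      + |w r| ^ p * (-(1 / r) * (1 - p) * E1 (r / R) ^ (1 - p - 1))))
    (hG1c.add hG2c)
    (continuousOn_const.mul ((((((continuous_const.mul (habs (p - 2) (by linarith))).mul
      hwc).mul hw').continuousOn.mul (continuousOn_E1_div_rpow hR _))).add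
      ((habs p hp0.le).continuousOn.mul (((continuousOn_const.div continuousOn_id
        fun r hr => hr.1.ne').neg.mul continuousOn_const).mul (continuousOn_E1_div_rpow hR _)))))
    (fun _ h h' => add_nonneg (hG1nn _ h h') (hG2nn _ h h'))
    (fun r hr hr1 => ?_) (fun r hr hr1 => ?_) (fun r hr => by positivity) hF ?_ ?_
  · obtain ⟨k1, k2⟩ := key
    have i1 : IntegrableOn (fun r => κ ^ p * (|w r| ^ p / (r * E1 (r / R) ^ p)))
        (Set.Ioc 0 1) := by
      refine Integrable.mono' k1 (hG1c.aestronglyMeasurable measurableSet_Ioc) ?_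
      rw [ae_restrict_iff' measurableSet_Ioc]
      refine Filter.Eventually.of_forall fun r hr => ?_
      rw [Real.norm_of_nonneg (hG1nn r hr.1 hr.2)]
      exact le_add_of_nonneg_right (hG2nn r hr.1 hr.2)
    have i2 : IntegrableOn
        (fun r => C * (|w' r + κ * w r / (r * E1 (r / R))| ^ p * r ^ (p - 1)))
        (Set.Ioc 0 1) := by
      refine Integrable.mono' k1 (hG2c.aestronglyMeasurable measurableSet_Ioc) ?_
      rw [ae_restrict_iff' measurableSet_Ioc]
      refine Filter.Eventually.of_forall fun r hr => ?_
      rw [Real.norm_of_nonneg (hG2nn r hr.1 hr.2)]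
      exact le_add_of_nonneg_left (hG1nn r hr.1 hr.2)
    rw [integral_add i1 i2, integral_const_mul, integral_const_mul] at k2
    refine ⟨?_, k2⟩
    refine (i2.const_mul C⁻¹).congr (Filter.Eventually.of_forall fun r => ?_)
    simp only
    rw [← mul_assoc, inv_mul_cancel₀ hC0.ne', one_mul]
  · have h1 : HasDerivAt (fun r => |w r| ^ p) (p * |w r| ^ (p - 2) * w r * w' r) r :=
      (hasDerivAt_abs_rpow (w r) (by linarith : 1 < p)).comp r (hw r)
    have h2 := (hasDerivAt_E1_div hR hr).rpow_const (p := 1 - p) (Or.inl (hE1 r hr hr1).ne')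
    exact (h1.mul h2).const_mul _
  -- `-κ w / (r E)` is the value of `w'` on the virtual extremal `E ^ κ`
  · have hE := hE1 r hr hr1
    have ht := abs_rpow_tangent_remainder hp (w' r) (-κ * w r / (r * E1 (r / R)))
    rw [← abs_rpow_sub_two_mul hp (-κ * w r / (r * E1 (r / R))), ← hC] at ht
    generalize E1 (r / R) = E at *
    have hd : w' r - -κ * w r / (r * E) = w' r + κ * w r / (r * E) := by ring
    rw [hd] at ht
    have hrnn : 0 ≤ r ^ (p - 1) := Real.rpow_nonneg hr.le _
    refine le_trans (le_of_eq ?_) (mul_le_mul_of_nonneg_right ht hrnn)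
    generalize |w' r + κ * w r / (r * E)| ^ p = D
    have hrp : r ^ (p - 1) = r ^ (p - 2) * r := by
      rw [← Real.rpow_add_one hr.ne']
      congr 1
      ring
    have hEp : E ^ p = E ^ (p - 2) * E ^ 2 := by
      rw [← Real.rpow_natCast, ← Real.rpow_add hE]
      congr 1
      push_cast
      ring
    have hE1p : E ^ (1 - p) = (E ^ (p - 2))⁻¹ * E⁻¹ := by
      rw [← Real.rpow_neg hE.le, ← Real.rpow_neg_one, ← Real.rpow_add hE]
      congr 1
      ring
    have hE1p' : E ^ (1 - p - 1) = (E ^ (p - 2))⁻¹ * E⁻¹ * E⁻¹ := by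
      rw [← hE1p, ← Real.rpow_neg_one E, ← Real.rpow_add hE]
      congr 1
    have hκp : κ ^ p = κ ^ (p - 2) * κ * κ := by
      have := abs_rpow_sub_two_mul hp κ
      rw [abs_of_pos hκ0] at this
      exact this.symm
    have hb : |-κ * w r / (r * E)| ^ (p - 2) * r ^ (p - 2) * E ^ (p - 2)
        = κ ^ (p - 2) * |w r| ^ (p - 2) := by
      rw [mul_assoc, ← Real.mul_rpow hr.le hE.le, ← Real.mul_rpow (abs_nonneg _) (by positivity),
        ← Real.mul_rpow hκ0.le (abs_nonneg _),
        abs_div, abs_mul, abs_neg, abs_of_pos (mul_pos hr hE), abs_of_pos hκ0,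
        div_mul_cancel₀ _ (mul_pos hr hE).ne']
    have hS : 0 < E ^ (p - 2) := Real.rpow_pos_of_pos hE _
    rw [hrp, hEp, hE1p, hE1p', hκp, ← abs_rpow_sub_two_mul hp (w r)]
    have hr2 : r ≠ 0 := hr.ne'
    generalize |-κ * w r / (r * E)| ^ (p - 2) = B at *
    generalize κ ^ (p - 2) = Y at *
    generalize |w r| ^ (p - 2) = X at *
    generalize r ^ (p - 2) = Q at *
    generalize E ^ (p - 2) = S at *
    have hp' : 1 - p = -(p * κ) := by linarith
    rw [hp']
    calc _ = (Y * X) * (S⁻¹ * (r * (κ ^ 2 * w r ^ 2 / (E ^ 2 * r ^ 2)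
          - p * κ * w r / (E * r) * (w' r + κ * w r / (E * r))))) + C * D * (Q * r) := by
          field_simp
          ring
      _ = (B * Q * S) * (S⁻¹ * (r * (κ ^ 2 * w r ^ 2 / (E ^ 2 * r ^ 2)
          - p * κ * w r / (E * r) * (w' r + κ * w r / (E * r))))) + C * D * (Q * r) := by
          rw [hb]
      _ = _ := by
          field_simp
          ring
  · simp [hw1, Real.zero_rpow hp0.ne']
  · intro δ hδ
    -- the boundary term is nonpositive
    filter_upwards [Ioc_mem_nhdsGT (zero_lt_one' ℝ)] with ε hε
    have hE := hE1 ε hε.1 hε.2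
    have : 0 ≤ κ ^ (p - 2) * κ * (|w ε| ^ p * E1 (ε / R) ^ (1 - p)) := by positivity
    linarith

/-- Pointwise control of `w` by the remainder of the logarithmic Hardy inequality: the fundamental
theorem of calculus for `w E^{-κ}` on `[r₀, 1]`, followed by Hölder's inequality against the weight
`(r E)^{-κ}`, whose `1/κ`-th power is the derivative of `-log E`. -/
theorem pointwise_le_remainder {p R κ : ℝ} (hp : 2 ≤ p) (hR : 1 ≤ R) (hκ : p * κ = p - 1)
    {w w' : ℝ → ℝ}
    (hw : ∀ r, HasDerivAt w (w' r) r) (hw' : Continuous w') (hw1 : w 1 = 0)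
    (hD : IntegrableOn (fun r => |w' r + κ * w r / (r * E1 (r / R))| ^ p * r ^ (p - 1))
        (Set.Ioc 0 1)) {r₀ : ℝ} (hr₀ : 0 < r₀) (hr₁ : r₀ ≤ 1) :
    |w r₀| ≤ (∫ r in Set.Ioc 0 1,
        |w' r + κ * w r / (r * E1 (r / R))| ^ p * r ^ (p - 1)) ^ (1 / p) *
      E1 (r₀ / R) ^ κ * (Real.log (E1 (r₀ / R)) - Real.log (E1 (1 / R))) ^ κ := by
  have hp0 : 0 < p := by linarith
  have hκ0 : 0 < κ := by
    by_contra h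
    have := mul_nonpos_of_nonneg_of_nonpos hp0.le (not_lt.1 h)
    linarith
  have hκp : κ = (p - 1) / p := by
    field_simp
    linarith
  have hwc : Continuous w := continuous_iff_continuousAt.2 fun r => (hw r).continuousAt
  have hE1 : ∀ r, 0 < r → r ≤ 1 → 0 < E1 (r / R) := fun r h h' =>
    lt_of_lt_of_le one_pos (E1_div_one_le hR h h')
  have hEc := continuousOn_E1_div hR
  set d : ℝ → ℝ := fun r => w' r + κ * w r / (r * E1 (r / R)) with hd
  have hdc : ContinuousOn d (Set.Ioc 0 1) :=
    hw'.continuousOn.add ((continuous_const.mul hwc).continuousOn.div (continuousOn_id.mul hEc)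
      fun r hr => mul_ne_zero hr.1.ne' (hE1 r hr.1 hr.2).ne')
  have hsub : Set.Icc r₀ 1 ⊆ Set.Ioc 0 1 := fun r hr => ⟨lt_of_lt_of_le hr₀ hr.1, hr.2⟩
  have hsub' : Set.Ioc r₀ 1 ⊆ Set.Ioc 0 1 := Set.Ioc_subset_Ioc_left hr₀.le
  -- the fundamental theorem of calculus for `w E^{-κ}`
  have ftc : ∫ r in Set.Ioc r₀ 1, d r * E1 (r / R) ^ (-κ) = - (w r₀ * E1 (r₀ / R) ^ (-κ)) := by
    rw [← intervalIntegral.integral_of_le hr₁]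
    have := intervalIntegral.integral_eq_sub_of_hasDerivAt (a := r₀) (b := 1)
      (f := fun r => w r * E1 (r / R) ^ (-κ)) (f' := fun r => d r * E1 (r / R) ^ (-κ)) ?_ ?_
    · rw [this, hw1]
      ring
    · intro r hr
      rw [Set.uIcc_of_le hr₁] at hr
      have hr' := hsub hr
      have hE := hE1 r hr'.1 hr'.2
      have h2 := (hasDerivAt_E1_div hR hr'.1).rpow_const (p := -κ) (Or.inl hE.ne')
      refine ((hw r).mul h2).congr_deriv ?_
      have hEE : E1 (r / R) ^ (-κ - 1) = E1 (r / R) ^ (-κ) / E1 (r / R) :=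
        Real.rpow_sub_one hE.ne' _
      rw [hEE, hd]
      have := hr'.1.ne'
      field_simp
    · apply ContinuousOn.intervalIntegrable
      rw [Set.uIcc_of_le hr₁]
      exact (hdc.mul (continuousOn_E1_div_rpow hR _)).mono hsub
  have logint : ∫ r in Set.Ioc r₀ 1, 1 / (r * E1 (r / R))
      = Real.log (E1 (r₀ / R)) - Real.log (E1 (1 / R)) := by
    rw [← intervalIntegral.integral_of_le hr₁]
    have := intervalIntegral.integral_eq_sub_of_hasDerivAt (a := r₀) (b := 1)
      (f := fun r => -Real.log (E1 (r / R))) (f' := fun r => 1 / (r * E1 (r / R))) ?_ ?_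
    · rw [this]
      ring
    · intro r hr
      rw [Set.uIcc_of_le hr₁] at hr
      have hr' := hsub hr
      have hE := hE1 r hr'.1 hr'.2
      refine ((hasDerivAt_E1_div hR hr'.1).log hE.ne').neg.congr_deriv ?_
      have := hr'.1.ne'
      have := hE.ne'
      field_simp
    · apply ContinuousOn.intervalIntegrable
      rw [Set.uIcc_of_le hr₁]
      refine (continuousOn_const.div (continuousOn_id.mul hEc) fun r hr => ?_).mono hsub
      exact mul_ne_zero hr.1.ne' (hE1 r hr.1 hr.2).ne'
  have hmem : ∀ (q : ENNReal) (f : ℝ → ℝ), ContinuousOn f (Set.Ioc 0 1) →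
      MemLp f q (volume.restrict (Set.Ioc r₀ 1)) := by
    intro q f hf
    obtain ⟨M, hM⟩ := isCompact_Icc.exists_bound_of_continuousOn (hf.mono hsub)
    refine MemLp.of_bound ((hf.mono hsub').aestronglyMeasurable measurableSet_Ioc) M ?_
    rw [ae_restrict_iff' measurableSet_Ioc]
    exact Filter.Eventually.of_forall fun r hr => hM r ⟨hr.1.le, hr.2⟩
  have hpq : p.HolderConjugate (p / (p - 1)) := Real.HolderConjugate.conjExponent (by linarith)
  have hholder := integral_mul_le_Lp_mul_Lq_of_nonneg (μ := volume.restrict (Set.Ioc r₀ 1)) hpq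
    (f := fun r => |d r| * r ^ κ) (g := fun r => r ^ (-κ) * E1 (r / R) ^ (-κ)) ?_ ?_
    (hmem _ _ (hdc.abs.mul (continuousOn_rpow_Ioc _)))
    (hmem _ _ ((continuousOn_rpow_Ioc _).mul (continuousOn_E1_div_rpow hR _)))
  rotate_left
  · rw [Filter.EventuallyLE, ae_restrict_iff' measurableSet_Ioc]
    refine Filter.Eventually.of_forall fun r hr => ?_
    have hr' := hsub' hr
    exact mul_nonneg (abs_nonneg _) (Real.rpow_nonneg hr'.1.le _)
  · rw [Filter.EventuallyLE, ae_restrict_iff' measurableSet_Ioc]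
    refine Filter.Eventually.of_forall fun r hr => ?_
    have hr' := hsub' hr
    exact mul_nonneg (Real.rpow_nonneg hr'.1.le _) (Real.rpow_nonneg (hE1 r hr'.1 hr'.2).le _)
  have e1 : ∫ r in Set.Ioc r₀ 1, |d r| * r ^ κ * (r ^ (-κ) * E1 (r / R) ^ (-κ))
      = ∫ r in Set.Ioc r₀ 1, |d r| * E1 (r / R) ^ (-κ) := by
    apply setIntegral_congr_fun measurableSet_Ioc
    intro r hr
    have hr' := hsub' hr
    have : r ^ κ * r ^ (-κ) = 1 := by
      rw [← Real.rpow_add hr'.1, add_neg_cancel, Real.rpow_zero]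
    simp only
    linear_combination (|d r| * E1 (r / R) ^ (-κ)) * this
  have e2 : ∫ r in Set.Ioc r₀ 1, (|d r| * r ^ κ) ^ p
      = ∫ r in Set.Ioc r₀ 1, |d r| ^ p * r ^ (p - 1) := by
    apply setIntegral_congr_fun measurableSet_Ioc
    intro r hr
    have hr' := hsub' hr
    simp only
    rw [Real.mul_rpow (abs_nonneg _) (Real.rpow_nonneg hr'.1.le _), ← Real.rpow_mul hr'.1.le,
      mul_comm κ p, hκ]
  have e3 : ∫ r in Set.Ioc r₀ 1, (r ^ (-κ) * E1 (r / R) ^ (-κ)) ^ (p / (p - 1))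
      = ∫ r in Set.Ioc r₀ 1, 1 / (r * E1 (r / R)) := by
    apply setIntegral_congr_fun measurableSet_Ioc
    intro r hr
    have hr' := hsub' hr
    have hE := hE1 r hr'.1 hr'.2
    simp only
    rw [← Real.mul_rpow hr'.1.le hE.le, ← Real.rpow_mul (mul_pos hr'.1 hE).le]
    have : -κ * (p / (p - 1)) = -1 := by
      rw [hκp]
      have : p - 1 ≠ 0 := by linarith
      field_simp
    rw [this, Real.rpow_neg_one, one_div]
  have e4 : 1 / (p / (p - 1)) = κ := by rw [hκp, one_div_div]
  rw [e1, e2, e3, e4, logint] at hholder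
  have hnn : ∀ r ∈ Set.Ioc (0 : ℝ) 1, 0 ≤ |d r| ^ p * r ^ (p - 1) := fun r hr =>
    mul_nonneg (Real.rpow_nonneg (abs_nonneg _) _) (Real.rpow_nonneg hr.1.le _)
  have e5 : ∫ r in Set.Ioc r₀ 1, |d r| ^ p * r ^ (p - 1)
      ≤ ∫ r in Set.Ioc 0 1, |d r| ^ p * r ^ (p - 1) := by
    apply setIntegral_mono_set hD _ hsub'.eventuallyLE
    rw [Filter.EventuallyLE, ae_restrict_iff' measurableSet_Ioc]
    exact Filter.Eventually.of_forall hnn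
  have e6 : 0 ≤ ∫ r in Set.Ioc r₀ 1, |d r| ^ p * r ^ (p - 1) :=
    setIntegral_nonneg measurableSet_Ioc fun r hr => hnn r (hsub' hr)
  have hL : 0 ≤ Real.log (E1 (r₀ / R)) - Real.log (E1 (1 / R)) := by
    rw [← logint]
    refine setIntegral_nonneg measurableSet_Ioc fun r hr => ?_
    have hr' := hsub' hr
    exact one_div_nonneg.2 (mul_pos hr'.1 (hE1 r hr'.1 hr'.2)).le
  have hE := hE1 r₀ hr₀ hr₁
  have f1 : |w r₀| * E1 (r₀ / R) ^ (-κ) ≤ ∫ r in Set.Ioc r₀ 1, |d r| * E1 (r / R) ^ (-κ) := by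
    have : |w r₀| * E1 (r₀ / R) ^ (-κ) = |∫ r in Set.Ioc r₀ 1, d r * E1 (r / R) ^ (-κ)| := by
      rw [ftc, abs_neg, abs_mul, abs_of_pos (Real.rpow_pos_of_pos hE _)]
    rw [this]
    refine (abs_integral_le_integral_abs).trans (le_of_eq ?_)
    apply setIntegral_congr_fun measurableSet_Ioc
    intro r hr
    have hr' := hsub' hr
    simp only
    rw [abs_mul, abs_of_pos (Real.rpow_pos_of_pos (hE1 r hr'.1 hr'.2) _)]
  have f2 : |w r₀| = |w r₀| * E1 (r₀ / R) ^ (-κ) * E1 (r₀ / R) ^ κ := by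
    rw [mul_assoc, ← Real.rpow_add hE, neg_add_cancel, Real.rpow_zero, mul_one]
  rw [f2]
  calc |w r₀| * E1 (r₀ / R) ^ (-κ) * E1 (r₀ / R) ^ κ
      ≤ ((∫ r in Set.Ioc 0 1, |d r| ^ p * r ^ (p - 1)) ^ (1 / p) *
        (Real.log (E1 (r₀ / R)) - Real.log (E1 (1 / R))) ^ κ) * E1 (r₀ / R) ^ κ := by
        refine mul_le_mul_of_nonneg_right ((f1.trans hholder).trans ?_)
          (Real.rpow_nonneg hE.le _)
        exact mul_le_mul_of_nonneg_right (Real.rpow_le_rpow e6 e5 (by positivity))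
          (Real.rpow_nonneg hL _)
    _ = _ := by ring

/-! ### Radial functions -/

/-- Smooth radial functions that vanish near the unit sphere. Radial means that the value depends
on the norm only. This class is stable under the Laplacian. -/
structure IsRadialVanishing {n : ℕ} (f : EuclideanSpace ℝ (Fin n) → ℝ) : Prop where
  smooth : ContDiff ℝ (⊤ : ℕ∞) f
  radial : ∀ x y, ‖x‖ = ‖y‖ → f x = f y
  vanish : ∀ x, ‖x‖ = 1 → f =ᶠ[nhds x] 0

/-- The profile of a function along the line spanned by `e`. -/
noncomputable def profile {n : ℕ} (e : EuclideanSpace ℝ (Fin n))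
    (f : EuclideanSpace ℝ (Fin n) → ℝ) (r : ℝ) : ℝ := f (r • e)

section Radial

variable {n : ℕ} {e : EuclideanSpace ℝ (Fin n)} {f : EuclideanSpace ℝ (Fin n) → ℝ}

theorem contDiff_profile (hf : ContDiff ℝ (⊤ : ℕ∞) f) : ContDiff ℝ (⊤ : ℕ∞) (profile e f) :=
  hf.comp (contDiff_id.smul contDiff_const)

theorem hasDerivAt_profile (hf : ContDiff ℝ (⊤ : ℕ∞) f) (r : ℝ) :
    HasDerivAt (profile e f) (deriv (profile e f) r) r :=
  ((contDiff_profile hf).differentiable (by simp) r).hasDerivAt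

theorem contDiff_deriv_profile (hf : ContDiff ℝ (⊤ : ℕ∞) f) :
    ContDiff ℝ (⊤ : ℕ∞) (deriv (profile e f)) :=
  ((contDiff_infty_iff_deriv).1 (contDiff_profile hf)).2

theorem hasDerivAt_deriv_profile (hf : ContDiff ℝ (⊤ : ℕ∞) f) (r : ℝ) :
    HasDerivAt (deriv (profile e f)) (deriv (deriv (profile e f)) r) r :=
  ((contDiff_deriv_profile hf).differentiable (by simp) r).hasDerivAt

theorem continuous_deriv_deriv_profile (hf : ContDiff ℝ (⊤ : ℕ∞) f) :
    Continuous (deriv (deriv (profile e f))) :=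
  ((contDiff_infty_iff_deriv).1 (contDiff_deriv_profile hf)).2.continuous

theorem profile_norm (he : ‖e‖ = 1) (hf : IsRadialVanishing f) (x : EuclideanSpace ℝ (Fin n)) :
    profile e f ‖x‖ = f x :=
  hf.radial _ _ (by rw [norm_smul, he, mul_one, norm_norm])

theorem profile_eventually_zero (he : ‖e‖ = 1) (hf : IsRadialVanishing f) :
    profile e f =ᶠ[nhds 1] 0 := by
  have hc : Filter.Tendsto (fun r : ℝ => r • e) (nhds 1) (nhds ((1 : ℝ) • e)) :=
    (continuous_id.smul continuous_const).tendsto 1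
  exact hc.eventually (hf.vanish ((1 : ℝ) • e) (by simp [he]))

theorem profile_one (he : ‖e‖ = 1) (hf : IsRadialVanishing f) : profile e f 1 = 0 :=
  (profile_eventually_zero he hf).eq_of_nhds

theorem deriv_profile_one (he : ‖e‖ = 1) (hf : IsRadialVanishing f) :
    deriv (profile e f) 1 = 0 := by
  rw [(profile_eventually_zero he hf).deriv_eq]
  simp

theorem hasFDerivAt_norm_of_ne {x : EuclideanSpace ℝ (Fin n)} (hx : x ≠ 0) :
    HasFDerivAt (fun y : EuclideanSpace ℝ (Fin n) => ‖y‖) (‖x‖⁻¹ • innerSL ℝ x) x := by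
  have hx' : ‖x‖ ≠ 0 := norm_ne_zero_iff.2 hx
  have h := (hasStrictFDerivAt_norm_sq x).hasFDerivAt.sqrt (by positivity)
  simp only [Real.sqrt_sq (norm_nonneg _)] at h
  refine h.congr_fderiv ?_
  ext v
  simp
  field_simp

theorem hasFDerivAt_radial (he : ‖e‖ = 1) (hf : IsRadialVanishing f)
    {x : EuclideanSpace ℝ (Fin n)} (hx : x ≠ 0) :
    HasFDerivAt f ((deriv (profile e f) ‖x‖ / ‖x‖) • innerSL ℝ x) x := by
  have h := (hasDerivAt_profile (e := e) hf.smooth ‖x‖).comp_hasFDerivAt x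
    (hasFDerivAt_norm_of_ne hx)
  have h2 : profile e f ∘ (fun y : EuclideanSpace ℝ (Fin n) => ‖y‖) = f :=
    funext fun y => profile_norm he hf y
  rw [h2] at h
  refine h.congr_fderiv ?_
  rw [smul_smul, div_eq_mul_inv]

theorem norm_gradient_radial (he : ‖e‖ = 1) (hf : IsRadialVanishing f)
    {x : EuclideanSpace ℝ (Fin n)} (hx : x ≠ 0) :
    ‖gradient f x‖ = |deriv (profile e f) ‖x‖| := by
  have hx' : ‖x‖ ≠ 0 := norm_ne_zero_iff.2 hx
  unfold gradient
  rw [LinearIsometryEquiv.norm_map, (hasFDerivAt_radial he hf hx).fderiv, norm_smul,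
    innerSL_apply_norm, norm_div, norm_norm, div_mul_cancel₀ _ hx', Real.norm_eq_abs]

/-- The Laplacian in polar coordinates, for radial functions. -/
theorem lap_radial (he : ‖e‖ = 1) (hf : IsRadialVanishing f)
    {x : EuclideanSpace ℝ (Fin n)} (hx : x ≠ 0) :
    lap f x = deriv (deriv (profile e f)) ‖x‖ +
      ((n : ℝ) - 1) / ‖x‖ * deriv (profile e f) ‖x‖ := by
  have hx' : ‖x‖ ≠ 0 := norm_ne_zero_iff.2 hx
  set w := profile e f with hw
  have hterm : ∀ i : Fin n,
      fderiv ℝ (fun y => fderiv ℝ f y (EuclideanSpace.single i 1)) x (EuclideanSpace.single i 1)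
        = (deriv (deriv w) ‖x‖ / ‖x‖ - deriv w ‖x‖ / ‖x‖ ^ 2) * ‖x‖⁻¹ * x i ^ 2
          + deriv w ‖x‖ / ‖x‖ := by
    intro i
    have hev : (fun y => fderiv ℝ f y (EuclideanSpace.single i 1)) =ᶠ[nhds x]
        fun y => (deriv w ‖y‖ / ‖y‖) * y i := by
      filter_upwards [isOpen_ne.mem_nhds hx] with y hy
      rw [(hasFDerivAt_radial he hf hy).fderiv]
      simp [hw, EuclideanSpace.inner_single_right]
    have h1 : HasDerivAt (fun r => deriv w r / r)
        (deriv (deriv w) ‖x‖ / ‖x‖ - deriv w ‖x‖ / ‖x‖ ^ 2) ‖x‖ := by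
      refine ((hasDerivAt_deriv_profile (e := e) hf.smooth ‖x‖).div
        (hasDerivAt_id ‖x‖) hx').congr_deriv ?_
      simp only [id]
      rw [hw]
      field_simp
    have h2 := h1.comp_hasFDerivAt x (hasFDerivAt_norm_of_ne hx)
    have h3 : HasFDerivAt (fun y : EuclideanSpace ℝ (Fin n) => y i)
        (EuclideanSpace.proj i : EuclideanSpace ℝ (Fin n) →L[ℝ] ℝ) x :=
      (EuclideanSpace.proj i : EuclideanSpace ℝ (Fin n) →L[ℝ] ℝ).hasFDerivAt
    have h4 := h2.mul h3
    rw [(h4.congr_of_eventuallyEq hev).fderiv]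
    simp [EuclideanSpace.inner_single_right]
    ring
  unfold lap
  rw [Finset.sum_congr rfl fun i _ => hterm i, Finset.sum_add_distrib, ← Finset.mul_sum,
    ← EuclideanSpace.real_norm_sq_eq]
  simp only [Finset.sum_const, Finset.card_univ, Fintype.card_fin, nsmul_eq_mul]
  field_simp
  ring

theorem contDiff_lap (hf : ContDiff ℝ (⊤ : ℕ∞) f) : ContDiff ℝ (⊤ : ℕ∞) (lap f) := by
  unfold lap
  refine ContDiff.sum fun i _ => ?_
  have h1 : ContDiff ℝ (⊤ : ℕ∞) (fun y => fderiv ℝ f y (EuclideanSpace.single i 1)) :=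
    (hf.fderiv_right (m := (⊤ : ℕ∞)) (by simp)).clm_apply contDiff_const
  exact (h1.fderiv_right (m := (⊤ : ℕ∞)) (by simp)).clm_apply contDiff_const

theorem IsRadialVanishing.lap (he : ‖e‖ = 1) (hf : IsRadialVanishing f) :
    IsRadialVanishing (lap f) where
  smooth := contDiff_lap hf.smooth
  radial := by
    intro x y hxy
    rcases eq_or_ne x 0 with rfl | hx
    · have : y = 0 := norm_eq_zero.1 (by rw [← hxy, norm_zero])
      rw [this]
    · have hy : y ≠ 0 := norm_ne_zero_iff.1 (by rw [← hxy]; exact norm_ne_zero_iff.2 hx)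
      rw [lap_radial he hf hx, lap_radial he hf hy, hxy]
  vanish := by
    intro x hx
    have h0 : ∀ (g : EuclideanSpace ℝ (Fin n) → ℝ) (v : EuclideanSpace ℝ (Fin n)),
        g =ᶠ[nhds x] 0 → (fun y => fderiv ℝ g y v) =ᶠ[nhds x] 0 := by
      intro g v hg
      filter_upwards [hg.fderiv (𝕜 := ℝ)] with y hy
      rw [hy]
      simp
    have h1 : ∀ i : Fin n, (fun z => fderiv ℝ (fun y => fderiv ℝ f y (EuclideanSpace.single i 1)) z
        (EuclideanSpace.single i 1)) =ᶠ[nhds x] 0 := fun i => h0 _ _ (h0 _ _ (hf.vanish x hx))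
    filter_upwards [Filter.eventually_all.2 h1] with y hy
    exact Finset.sum_eq_zero fun i _ => hy i

theorem IsRadialVanishing.lap_iterate (he : ‖e‖ = 1) (hf : IsRadialVanishing f) (j : ℕ) :
    IsRadialVanishing (_root_.lap^[j] f) := by
  induction j with
  | zero => exact hf
  | succ j ih =>
    rw [Function.iterate_succ_apply']
    exact ih.lap he

theorem profile_lap (he : ‖e‖ = 1) (hf : IsRadialVanishing f) {r : ℝ} (hr : 0 < r) :
    profile e (lap f) r = deriv (deriv (profile e f)) r +
      ((n : ℝ) - 1) / r * deriv (profile e f) r := by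
  have hre : ‖r • e‖ = r := by rw [norm_smul, he, mul_one, Real.norm_of_nonneg hr.le]
  have hne : r • e ≠ 0 := norm_ne_zero_iff.1 (by rw [hre]; exact hr.ne')
  have := lap_radial he hf hne
  rwa [hre] at this

end Radial

/-! ### Rellich inequalities for radial functions -/

section Chain

variable {n : ℕ} {e : EuclideanSpace ℝ (Fin n)}

/-- The Hardy inequality from `w'` to the radial Laplacian `w'' + (n - 1) w' / r`. The constant that
`hardy_weighted` sees is `-c`. -/
theorem gradient_step {p s c : ℝ} (hp : 2 ≤ p) (hs : 0 < s + 1 - p)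
    (hc : p * c = p * ((n : ℝ) - 1) - (s + 1 - p)) (hc0 : 0 < c) (he : ‖e‖ = 1)
    {f : EuclideanSpace ℝ (Fin n) → ℝ} (hf : IsRadialVanishing f)
    (hF : IntegrableOn (fun r => |profile e (lap f) r| ^ p * r ^ s) (Set.Ioc 0 1)) :
    IntegrableOn (fun r => |deriv (profile e f) r| ^ p * r ^ (s - p)) (Set.Ioc 0 1) ∧
      c ^ p * ∫ r in Set.Ioc 0 1, |deriv (profile e f) r| ^ p * r ^ (s - p) ≤
        ∫ r in Set.Ioc 0 1, |profile e (lap f) r| ^ p * r ^ s := by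
  have hcongr : Set.EqOn (fun r => |profile e (lap f) r| ^ p * r ^ s)
      (fun r => |deriv (deriv (profile e f)) r + ((n : ℝ) - 1) / r * deriv (profile e f) r| ^ p
        * r ^ s) (Set.Ioc 0 1) := by
    intro r hr
    simp only
    rw [profile_lap he hf hr.1]
  have h := hardy_weighted (s := s) (a := (n : ℝ) - 1) (c := -c) hp
    (hasDerivAt_deriv_profile (e := e) hf.smooth) (continuous_deriv_deriv_profile hf.smooth)
    (deriv_profile_one he hf) hs (by linarith) (by linarith)
    (hF.congr_fun hcongr measurableSet_Ioc)
  rwa [abs_neg, abs_of_pos hc0, ← setIntegral_congr_fun measurableSet_Ioc hcongr] at h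

/-- The classical Hardy inequality from `w` to `w'`. -/
theorem function_step {p s c : ℝ} (hp : 2 ≤ p) (hs : 0 < s + 1 - p)
    (hc : p * c = s + 1 - p) (he : ‖e‖ = 1)
    {f : EuclideanSpace ℝ (Fin n) → ℝ} (hf : IsRadialVanishing f)
    (hF : IntegrableOn (fun r => |deriv (profile e f) r| ^ p * r ^ s) (Set.Ioc 0 1)) :
    IntegrableOn (fun r => |profile e f r| ^ p * r ^ (s - p)) (Set.Ioc 0 1) ∧
      c ^ p * ∫ r in Set.Ioc 0 1, |profile e f r| ^ p * r ^ (s - p) ≤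
        ∫ r in Set.Ioc 0 1, |deriv (profile e f) r| ^ p * r ^ s := by
  have hc0 : 0 < c := by
    by_contra h
    have := mul_nonpos_of_nonneg_of_nonpos (by linarith : 0 ≤ p) (not_lt.1 h)
    linarith
  have h := hardy_weighted (s := s) (a := 0) (c := c) hp
    (hasDerivAt_profile (e := e) hf.smooth) (contDiff_deriv_profile hf.smooth).continuous
    (profile_one he hf) hs (by linarith) hc0.ne' (by simpa using hF)
  simpa [abs_of_pos hc0] using h

/-- One step of the weighted Rellich inequality for radial functions: the composition of two
Hardy inequalities. -/
theorem rellich_step {p s c₁ c₂ : ℝ} (hp : 2 ≤ p) (hs : 0 < s + 1 - 2 * p) (hsn : s + 1 ≤ n)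
    (hc₁ : p * c₁ = p * ((n : ℝ) - 1) - (s + 1 - p)) (hc₂ : p * c₂ = s + 1 - 2 * p)
    (he : ‖e‖ = 1)
    {f : EuclideanSpace ℝ (Fin n) → ℝ} (hf : IsRadialVanishing f)
    (hF : IntegrableOn (fun r => |profile e (lap f) r| ^ p * r ^ s) (Set.Ioc 0 1)) :
    IntegrableOn (fun r => |profile e f r| ^ p * r ^ (s - 2 * p)) (Set.Ioc 0 1) ∧
      (c₁ * c₂) ^ p * ∫ r in Set.Ioc 0 1, |profile e f r| ^ p * r ^ (s - 2 * p) ≤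
        ∫ r in Set.Ioc 0 1, |profile e (lap f) r| ^ p * r ^ s := by
  have hp0 : 0 < p := by linarith
  have hc₁0 : 0 < c₁ := by
    refine pos_of_mul_pos_right (a := p) ?_ hp0.le
    rw [hc₁]
    nlinarith
  have hc₂0 : 0 < c₂ := by
    refine pos_of_mul_pos_right (a := p) ?_ hp0.le
    rw [hc₂]
    linarith
  obtain ⟨i1, k1⟩ := gradient_step hp (by linarith) hc₁ hc₁0 he hf hF
  obtain ⟨i2, k2⟩ := function_step (c := c₂) hp (by linarith) (by linarith) he hf i1
  have hs2 : s - p - p = s - 2 * p := by ring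
  rw [hs2] at i2 k2
  refine ⟨i2, le_trans ?_ k1⟩
  rw [Real.mul_rpow hc₁0.le hc₂0.le, mul_assoc]
  exact mul_le_mul_of_nonneg_left k2 (Real.rpow_nonneg hc₁0.le _)

/-- The weighted Rellich inequality for `Δ^i`. The factors are those of `R_{n,2 i,p}` for `α = 0`,
and of `R_{n,2 i + 1,p}`, apart from the gradient factor, for `α = 1`. -/
theorem rellich_chain {p α : ℝ} (hp : 2 ≤ p) (hα : 0 ≤ α) (he : ‖e‖ = 1) (i : ℕ)
    (hi : 0 < (n : ℝ) - α * p - 2 * i * p)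
    {g : EuclideanSpace ℝ (Fin n) → ℝ} (hg : IsRadialVanishing g)
    (hF : IntegrableOn (fun r => |profile e (lap^[i] g) r| ^ p * r ^ ((n : ℝ) - 1 - α * p))
      (Set.Ioc 0 1)) :
    IntegrableOn (fun r => |profile e g r| ^ p * r ^ ((n : ℝ) - 1 - α * p - 2 * i * p))
        (Set.Ioc 0 1) ∧
      (∏ j ∈ Finset.range i, (((n : ℝ) * (p - 1) + α * p + 2 * j * p) / p *
          (((n : ℝ) - α * p - 2 * (j + 1) * p) / p)) ^ p) *
        ∫ r in Set.Ioc 0 1, |profile e g r| ^ p * r ^ ((n : ℝ) - 1 - α * p - 2 * i * p) ≤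
        ∫ r in Set.Ioc 0 1, |profile e (lap^[i] g) r| ^ p * r ^ ((n : ℝ) - 1 - α * p) := by
  have hp0 : 0 < p := by linarith
  induction i generalizing g with
  | zero => simpa using hF
  | succ i ih =>
    rw [Function.iterate_succ_apply] at hF ⊢
    push_cast at hi ⊢
    have hαp : 0 ≤ α * p := by positivity
    have hip : 0 ≤ 2 * (i : ℝ) * p := by positivity
    obtain ⟨i1, k1⟩ := ih (by linarith) (hg.lap he) hF
    obtain ⟨i2, k2⟩ := rellich_step (s := (n : ℝ) - 1 - α * p - 2 * i * p)
      (c₁ := ((n : ℝ) * (p - 1) + α * p + 2 * i * p) / p)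
      (c₂ := ((n : ℝ) - α * p - 2 * (i + 1) * p) / p) hp (by linarith) (by linarith)
      (by field_simp; ring) (by field_simp; ring) he hg i1
    have hs2 : (n : ℝ) - 1 - α * p - 2 * i * p - 2 * p
        = (n : ℝ) - 1 - α * p - 2 * (i + 1) * p := by ring
    rw [hs2] at i2 k2
    refine ⟨i2, le_trans ?_ k1⟩
    rw [Finset.prod_range_succ, mul_assoc]
    refine mul_le_mul_of_nonneg_left k2 (Finset.prod_nonneg fun j hj => ?_)
    have hj' : (j : ℝ) + 1 ≤ i := by exact_mod_cast Finset.mem_range.1 hj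
    have hjp : ((j : ℝ) + 1) * p ≤ i * p := mul_le_mul_of_nonneg_right hj' hp0.le
    have h1 : 0 ≤ (n : ℝ) - α * p - 2 * (j + 1) * p := by linarith
    have h2 : 0 ≤ p - 1 := by linarith
    positivity

end Chain

/-- Polar coordinates on the unit ball; the value at the origin is irrelevant. -/
theorem setIntegral_ball_radial {n : ℕ} (hn : 0 < n) (F : EuclideanSpace ℝ (Fin n) → ℝ)
    (φ : ℝ → ℝ) (h : ∀ x, x ≠ 0 → F x = φ ‖x‖) :
    ∫ x in Metric.ball (0 : EuclideanSpace ℝ (Fin n)) 1, F x =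
      sphereArea n * ∫ r in Set.Ioc 0 1, φ r * r ^ ((n : ℝ) - 1) := by
  have : Nonempty (Fin n) := ⟨⟨0, hn⟩⟩
  have h1 : ∫ x in Metric.ball (0 : EuclideanSpace ℝ (Fin n)) 1, F x
      = ∫ x : EuclideanSpace ℝ (Fin n), (Set.Iio 1).indicator φ ‖x‖ := by
    rw [← integral_indicator Metric.isOpen_ball.measurableSet]
    apply integral_congr_ae
    have h0 : ∀ᵐ x : EuclideanSpace ℝ (Fin n), x ≠ 0 := by
      rw [ae_iff]
      simp
    filter_upwards [h0] with x hx
    by_cases hx1 : ‖x‖ < 1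
    · rw [Set.indicator_of_mem (by simpa using hx1), Set.indicator_of_mem (by simpa using hx1),
        h x hx]
    · rw [Set.indicator_of_notMem (by simpa using hx1),
        Set.indicator_of_notMem (by simpa using hx1)]
  rw [h1, integral_fun_norm_addHaar, finrank_euclideanSpace_fin]
  have h2 : ∫ y in Set.Ioi (0 : ℝ), y ^ (n - 1) • (Set.Iio 1).indicator φ y
      = ∫ r in Set.Ioc 0 1, φ r * r ^ ((n : ℝ) - 1) := by
    have : (fun y : ℝ => y ^ (n - 1) • (Set.Iio 1).indicator φ y)
        = (Set.Iio 1).indicator fun y => y ^ (n - 1) • φ y := by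
      ext y
      by_cases hy : y ∈ Set.Iio (1 : ℝ) <;> simp [hy]
    rw [this, setIntegral_indicator measurableSet_Iio, integral_Ioc_eq_integral_Ioo,
      Set.Ioi_inter_Iio]
    apply setIntegral_congr_fun measurableSet_Ioo
    intro r hr
    simp only [smul_eq_mul]
    rw [mul_comm, ← Real.rpow_natCast, Nat.cast_sub (by omega), Nat.cast_one]
  rw [h2]
  simp only [nsmul_eq_mul, smul_eq_mul, sphereArea, Measure.real, mul_assoc]

/-! ### Higher order Rellich inequality -/

/-- The higher order Rellich inequality, reducing `∇^m u` to the Laplacian of `u` with the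
critical weight. -/
theorem reduce_to_laplacian {n m : ℕ} (hm : 2 ≤ m) (hmn : 2 * m ≤ n)
    {e : EuclideanSpace ℝ (Fin n)} (he : ‖e‖ = 1)
    {u : EuclideanSpace ℝ (Fin n) → ℝ} (hu : IsRadialVanishing u) :
    IntegrableOn (fun r => |profile e (lap u) r| ^ ((n : ℝ) / m) * r ^ (2 * ((n : ℝ) / m) - 1))
        (Set.Ioc 0 1) ∧
      sphereArea n * (Rconst n (m - 2) ((n : ℝ) / m) *
        ∫ r in Set.Ioc 0 1,
          |profile e (lap u) r| ^ ((n : ℝ) / m) * r ^ (2 * ((n : ℝ) / m) - 1)) ≤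
        ∫ x in Metric.ball (0 : EuclideanSpace ℝ (Fin n)) 1,
          (nablaPowNorm m u x) ^ ((n : ℝ) / m) := by
  have hm0 : (0 : ℝ) < m := by exact_mod_cast (by omega : 0 < m)
  have hω : 0 ≤ sphereArea n := mul_nonneg (Nat.cast_nonneg n) ENNReal.toReal_nonneg
  obtain ⟨p, hpdef⟩ : ∃ p : ℝ, p = (n : ℝ) / m := ⟨_, rfl⟩
  have hmn' : 2 * (m : ℝ) ≤ n := by exact_mod_cast hmn
  have hp : 2 ≤ p := by rwa [hpdef, le_div_iff₀ hm0]
  have hp0 : 0 < p := by linarith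
  have hnp : (n : ℝ) = m * p := by rw [hpdef]; field_simp
  have hn1 : 0 ≤ (n : ℝ) - 1 := by
    have : (1 : ℝ) ≤ n := by exact_mod_cast (by omega : 1 ≤ n)
    linarith
  rw [← hpdef]
  obtain ⟨k, hk⟩ : ∃ k, m / 2 = k + 1 := ⟨m / 2 - 1, by omega⟩
  have hk2 : (m - 2) / 2 = k := by omega
  have htop : IsRadialVanishing (lap^[k + 1] u) := hu.lap_iterate he (k + 1)
  have hint : ∀ w : ℝ → ℝ, Continuous w →
      IntegrableOn (fun r => |w r| ^ p * r ^ ((n : ℝ) - 1)) (Set.Ioc 0 1) := by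
    intro w hw
    exact ((hw.abs.rpow_const fun _ => Or.inr hp0.le).mul
      (continuous_id.rpow_const fun _ => Or.inr hn1)).integrableOn_Ioc
  by_cases hev : Even m
  · have hmk : m = 2 * (k + 1) := by
      have := Nat.div_mul_cancel hev.two_dvd
      omega
    have hmk' : (m : ℝ) = 2 * (k + 1) := by exact_mod_cast hmk
    have hev2 : Even (m - 2) := ⟨k, by omega⟩
    have hexp : (n : ℝ) - 1 - 0 * p - 2 * k * p = 2 * p - 1 := by rw [hnp, hmk']; ring
    have hi : IntegrableOn (fun r => |profile e (lap^[k] (lap u)) r| ^ p *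
        r ^ ((n : ℝ) - 1 - 0 * p)) (Set.Ioc 0 1) := by
      rw [zero_mul, sub_zero, ← Function.iterate_succ_apply]
      exact hint _ (contDiff_profile htop.smooth).continuous
    obtain ⟨i1, k1⟩ := rellich_chain hp le_rfl he k (by linarith) (hu.lap he) hi
    rw [hexp] at i1 k1
    refine ⟨i1, ?_⟩
    rw [setIntegral_ball_radial (by omega) _ (fun r => |profile e (lap^[k + 1] u) r| ^ p)]
    · refine mul_le_mul_of_nonneg_left ?_ hω
      rw [← Function.iterate_succ_apply] at k1
      simpa [Rconst, hev2, hk2] using k1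
    · intro x _
      simp only [nablaPowNorm, if_pos hev, hk]
      rw [profile_norm he htop]
  · have hmk : m = 2 * (k + 1) + 1 := by
      have := Nat.odd_iff.1 (Nat.not_even_iff_odd.1 hev)
      omega
    have hmk' : (m : ℝ) = 2 * (k + 1) + 1 := by exact_mod_cast hmk
    have hev2 : ¬ Even (m - 2) := by
      rw [Nat.not_even_iff_odd]
      exact ⟨k, by omega⟩
    have hexp : (n : ℝ) - 1 - 1 * p - 2 * k * p = 2 * p - 1 := by rw [hnp, hmk']; ring
    have hkp : 0 ≤ 2 * (k : ℝ) * p := by positivity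
    obtain ⟨i0, k0⟩ := function_step (s := (n : ℝ) - 1) (c := ((n : ℝ) - p) / p) hp
      (by linarith) (by field_simp; ring) he htop
      (hint _ (contDiff_deriv_profile htop.smooth).continuous)
    have hi : IntegrableOn (fun r => |profile e (lap^[k] (lap u)) r| ^ p *
        r ^ ((n : ℝ) - 1 - 1 * p)) (Set.Ioc 0 1) := by
      rw [one_mul, ← Function.iterate_succ_apply]
      exact i0
    obtain ⟨i1, k1⟩ := rellich_chain hp zero_le_one he k (by linarith) (hu.lap he) hi
    rw [hexp] at i1 k1
    refine ⟨i1, ?_⟩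
    rw [setIntegral_ball_radial (by omega) _ (fun r => |deriv (profile e (lap^[k + 1] u)) r| ^ p)]
    · refine mul_le_mul_of_nonneg_left ?_ hω
      rw [← Function.iterate_succ_apply, one_mul] at k1
      refine le_trans ?_ k0
      have hcn : 0 ≤ (((n : ℝ) - p) / p) ^ p :=
        Real.rpow_nonneg (div_nonneg (by linarith) hp0.le) _
      refine le_trans (le_of_eq ?_) (mul_le_mul_of_nonneg_left k1 hcn)
      simp only [Rconst, if_neg hev2, hk2]
      rw [mul_assoc]
    · intro x hx
      simp only [nablaPowNorm, if_neg hev, hk]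
      rw [norm_gradient_radial he htop hx]

theorem Rconst_pos {n m : ℕ} (hm : 2 ≤ m) (hmn : 2 * m ≤ n) :
    0 < Rconst n (m - 2) ((n : ℝ) / m) := by
  have hm0 : (0 : ℝ) < m := by exact_mod_cast (by omega : 0 < m)
  obtain ⟨p, hpdef⟩ : ∃ p : ℝ, p = (n : ℝ) / m := ⟨_, rfl⟩
  have hmn' : 2 * (m : ℝ) ≤ n := by exact_mod_cast hmn
  have hp : 2 ≤ p := by rwa [hpdef, le_div_iff₀ hm0]
  have hp0 : 0 < p := by linarith
  have hnp : (n : ℝ) = m * p := by rw [hpdef]; field_simp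
  have hn0 : (0 : ℝ) < n := by rw [hnp]; positivity
  have hn1 : 0 < (n : ℝ) * (p - 1) := mul_pos hn0 (by linarith)
  rw [← hpdef]
  unfold Rconst
  split_ifs with h
  · refine Finset.prod_pos fun j hj => ?_
    have hj2 := Finset.mem_range.1 hj
    have hj' : 2 * ((j : ℝ) + 1) + 2 ≤ m := by exact_mod_cast (by omega : 2 * (j + 1) + 2 ≤ m)
    have h3 : 0 < (n : ℝ) - 2 * (j + 1) * p := by rw [hnp]; nlinarith
    positivity
  · have hodd := Nat.odd_iff.1 (Nat.not_even_iff_odd.1 h)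
    have hm3 : (3 : ℝ) ≤ m := by exact_mod_cast (by omega : 3 ≤ m)
    have h4 : 0 < (n : ℝ) - p := by rw [hnp]; nlinarith
    refine mul_pos (by positivity) (Finset.prod_pos fun j hj => ?_)
    have hj2 := Finset.mem_range.1 hj
    have hj' : 2 * ((j : ℝ) + 1) + 3 ≤ m := by exact_mod_cast (by omega : 2 * (j + 1) + 3 ≤ m)
    have h3 : 0 < (n : ℝ) - p - 2 * (j + 1) * p := by rw [hnp]; nlinarith
    positivity

/-- Pointwise estimate for radial functions (Proposition 6). -/
theorem stmt17 (n m : ℕ) (hm : 2 ≤ m) (hmn : 2 * m ≤ n) (R : ℝ) (hR : 1 ≤ R)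
    (u : EuclideanSpace ℝ (Fin n) → ℝ) (hsmooth : ContDiff ℝ (⊤ : ℕ∞) u)
    (hcpt : HasCompactSupport u) (hsupp : tsupport u ⊆ Metric.ball 0 1)
    (hrad : ∃ g : ℝ → ℝ, ∀ x, u x = g ‖x‖)
    (x : EuclideanSpace ℝ (Fin n)) (hx : x ∈ Metric.ball (0 : EuclideanSpace ℝ (Fin n)) 1)
    (hx0 : x ≠ 0) :
    |u x| ≤
      (Inm n m (Metric.ball 0 1) R u /
          (sphereArea n * (1 / (2 ^ ((n : ℝ) / m - 1) - 1)) * ((n : ℝ) - 2) ^ ((n : ℝ) / m) *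
            Rconst n (m - 2) ((n : ℝ) / m))) ^ ((m : ℝ) / n) *
        (E1 (‖x‖ / R)) ^ (1 - (m : ℝ) / n) *
          (Real.log (E1 (‖x‖ / R)) - Real.log (E1 (1 / R))) ^ (1 - (m : ℝ) / n) := by
  have hm0 : (0 : ℝ) < m := by exact_mod_cast (by omega : 0 < m)
  have hmn' : 2 * (m : ℝ) ≤ n := by exact_mod_cast hmn
  have hn4 : (4 : ℝ) ≤ n := by exact_mod_cast (by omega : 4 ≤ n)
  have hn0 : (0 : ℝ) < n := by linarith
  have : Nonempty (Fin n) := ⟨⟨0, by omega⟩⟩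
  obtain ⟨e, he⟩ := exists_norm_eq (EuclideanSpace ℝ (Fin n)) (zero_le_one' ℝ)
  have hu : IsRadialVanishing u := by
    refine ⟨hsmooth, ?_, ?_⟩
    · obtain ⟨g, hg⟩ := hrad
      intro x y hxy
      rw [hg, hg, hxy]
    · intro y hy
      apply notMem_tsupport_iff_eventuallyEq.1
      intro hy'
      have := hsupp hy'
      rw [mem_ball_zero_iff, hy] at this
      exact lt_irrefl _ this
  have hR0 := Rconst_pos hm hmn
  obtain ⟨i1, k1⟩ := reduce_to_laplacian hm hmn he hu
  have hκ1 : 1 - (m : ℝ) / n = ((n : ℝ) - m) / n := by field_simp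
  have hRnm : Rnm n m = (((n : ℝ) - 2) * (1 - (m : ℝ) / n)) ^ ((n : ℝ) / m) *
      Rconst n (m - 2) ((n : ℝ) / m) := by
    rw [Rnm, hκ1, mul_div_assoc]
  have hmn1 : (m : ℝ) / n = 1 / ((n : ℝ) / m) := by rw [one_div_div]
  unfold Inm
  rw [hRnm]
  rw [hmn1]
  obtain ⟨p, hpdef⟩ : ∃ p : ℝ, p = (n : ℝ) / m := ⟨_, rfl⟩
  have hp : 2 ≤ p := by rwa [hpdef, le_div_iff₀ hm0]
  have hp0 : 0 < p := by linarith
  have hball : ∫ x in Metric.ball (0 : EuclideanSpace ℝ (Fin n)) 1,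
      |u x| ^ p / (‖x‖ ^ n * (E1 (‖x‖ / R)) ^ p)
      = sphereArea n * ∫ r in Set.Ioc 0 1, |profile e u r| ^ p / (r * E1 (r / R) ^ p) := by
    rw [setIntegral_ball_radial (by omega) _
      (fun r => |profile e u r| ^ p / (r ^ n * E1 (r / R) ^ p))]
    · congr 1
      apply setIntegral_congr_fun measurableSet_Ioc
      intro r hr
      have hE := lt_of_lt_of_le one_pos (E1_div_one_le hR hr.1 hr.2)
      have hEp : E1 (r / R) ^ p ≠ 0 := (Real.rpow_pos_of_pos hE p).ne'
      have hr0 := hr.1.ne'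
      simp only
      rw [Real.rpow_sub_one hr0, Real.rpow_natCast]
      field_simp
    · intro y _
      rw [profile_norm he hu]
  rw [← hpdef] at i1 k1 hR0 ⊢
  have hω : 0 < sphereArea n := by
    refine mul_pos hn0 (ENNReal.toReal_pos ?_ measure_ball_lt_top.ne)
    exact (Metric.measure_ball_pos volume _ one_pos).ne'
  rw [hball]
  obtain ⟨κ, hκdef⟩ : ∃ κ : ℝ, κ = 1 - 1 / p := ⟨_, rfl⟩
  have hκ : p * κ = p - 1 := by rw [hκdef]; field_simp
  have hκ0 : 0 ≤ κ := by
    rw [hκdef, sub_nonneg, div_le_one hp0]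
    linarith
  rw [← hκdef]
  -- the weight `r ^ (2 p - 1)` of `Δu` becomes the critical weight `r ^ (p - 1)` of `w'`
  obtain ⟨i2, k2⟩ := gradient_step (s := 2 * p - 1) (c := (n : ℝ) - 2) hp (by linarith)
    (by ring) (by linarith) he hu i1
  have hexp : 2 * p - 1 - p = p - 1 := by ring
  rw [hexp] at i2 k2
  have hw := hasDerivAt_profile (e := e) hu.smooth
  have hw' := (contDiff_deriv_profile (e := e) hu.smooth).continuous
  have hw1 := profile_one he hu
  obtain ⟨i3, k3⟩ := log_hardy hp hR hκ rfl hw hw' hw1 i2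
  have hx0' : 0 < ‖x‖ := norm_pos_iff.2 hx0
  have hx1 : ‖x‖ ≤ 1 := (mem_ball_zero_iff.1 hx).le
  have hfin := pointwise_le_remainder hp hR hκ hw hw' hw1 i3 hx0' hx1
  rw [profile_norm he hu] at hfin
  refine hfin.trans ?_
  have hC : 0 < (1 : ℝ) / (2 ^ (p - 1) - 1) := by
    have h2 : (2 : ℝ) ≤ 2 ^ (p - 1) := by
      calc (2 : ℝ) = 2 ^ (1 : ℝ) := by simp
        _ ≤ 2 ^ (p - 1) := Real.rpow_le_rpow_of_exponent_le (by norm_num) (by linarith)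
    apply one_div_pos.2
    linarith
  have hE := lt_of_lt_of_le one_pos (E1_div_one_le hR hx0' hx1)
  have hL : 0 ≤ Real.log (E1 (‖x‖ / R)) - Real.log (E1 (1 / R)) := by
    rw [sub_nonneg]
    refine Real.log_le_log (lt_of_lt_of_le one_pos (E1_div_one_le hR one_pos le_rfl)) ?_
    unfold E1
    have hR1 : 0 < R := by linarith
    have := Real.log_le_log (div_pos hx0' hR1) (div_le_div_of_nonneg_right hx1 hR1.le)
    linarith
  refine mul_le_mul_of_nonneg_right (mul_le_mul_of_nonneg_right ?_ (Real.rpow_nonneg hE.le _))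
    (Real.rpow_nonneg hL _)
  refine Real.rpow_le_rpow (setIntegral_nonneg measurableSet_Ioc fun r hr =>
    mul_nonneg (Real.rpow_nonneg (abs_nonneg _) _) (Real.rpow_nonneg hr.1.le _)) ?_ (by positivity)
  have hn2 : 0 < ((n : ℝ) - 2) ^ p := Real.rpow_pos_of_pos (by linarith) _
  rw [le_div_iff₀ (mul_pos (mul_pos (mul_pos hω hC) hn2) hR0),
    Real.mul_rpow (by linarith : (0 : ℝ) ≤ (n : ℝ) - 2) hκ0]
  -- chain the three inequalities for `∇^m u`, `Δu` and `w'`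
  have k4 := mul_le_mul_of_nonneg_left ((mul_le_mul_of_nonneg_left k3 hn2.le).trans k2)
    (mul_pos hω hR0).le
  have k5 := k4.trans (le_of_eq_of_le (mul_assoc _ _ _) k1)
  linarith
end

section
/- For every real number a ≥ 1 and every s ∈ (0,1], one has (a − ln s) · ( ln(a − ln s) − ln a ) / ( 1 + ln(a − ln s) ) ≤ − ln s. -/
/-!
Put `u = a - log s`, so `u ≥ a ≥ 1` and the denominator `1 + log u` is positive. Clearing it, the
claim `u (log u - log a) ≤ (u - a) (1 + log u)` rearranges to
`a (log u - log a) ≤ (u - a) + (u - a) log a`. This follows from `log (u / a) ≤ u / a - 1`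
together with `(u - a) log a ≥ 0`.
-/

/-- An elementary logarithmic inequality. -/
theorem stmt18 (a s : ℝ) (ha : 1 ≤ a) (hs0 : 0 < s) (hs1 : s ≤ 1) :
    (a - Real.log s) * (Real.log (a - Real.log s) - Real.log a) /
        (1 + Real.log (a - Real.log s)) ≤ -Real.log s := by
  have hs : Real.log s ≤ 0 := Real.log_nonpos hs0.le hs1
  have ha0 : 0 < a := by linarith
  obtain ⟨u, hu⟩ : ∃ u, u = a - Real.log s := ⟨_, rfl⟩
  have hau : a ≤ u := by linarith
  have hu0 : 0 < u := by linarith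
  have hlu : 0 ≤ Real.log u := Real.log_nonneg (by linarith)
  have hla : 0 ≤ Real.log a := Real.log_nonneg ha
  have key : a * (Real.log u - Real.log a) ≤ u - a := by
    have h := Real.log_le_sub_one_of_pos (div_pos hu0 ha0)
    rw [Real.log_div hu0.ne' ha0.ne'] at h
    calc a * (Real.log u - Real.log a) ≤ a * (u / a - 1) := by gcongr
      _ = u - a := by field_simp
  have hprod : 0 ≤ (u - a) * Real.log a := mul_nonneg (by linarith) hla
  rw [← hu, show -Real.log s = u - a by linarith, div_le_iff₀ (by linarith)]
  linarith
end
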